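/- Let A : [0,∞) → ℝ^{2×2} be bounded and continuous with A(t) → A_∞ as t → ∞ for a constant matrix A_∞ satisfying det A_∞ < 0. Let Φ : [0,∞) → ℝ^{2×2} be a fundamental matrix of the system x′ = A(t)x, i.e. Φ is differentiable with Φ′(t) = A(t)Φ(t), Φ(0) = I, and Φ(t) is invertible for every t ≥ 0. Then the system has an exponential dichotomy on [0,∞): there exist a matrix P ∈ ℝ^{2×2} with P² = P and constants K ≥ 1, α > 0 such that ‖Φ(t) P Φ(s)^{−1}‖ ≤ K e^{−α(t−s)} whenever 0 ≤ s ≤ t, and ‖Φ(t)(I − P)Φ(s)^{−1}‖ ≤ K e^{−α(s−t)} whenever 0 ≤ t ≤ s. -/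

import Mathlib

noncomputable section

open Real Filter

/-- The operator-type matrix norm used in the dichotomy estimates: here we take the fixed norm
given by the sum of the absolute values of the entries (equivalent to the operator norm). -/
def matNorm (M : Matrix (Fin 2) (Fin 2) ℝ) : ℝ := ∑ i : Fin 2, ∑ j : Fin 2, |M i j|

/-!
Diagonalising `A_∞` turns the system, from some time `T` on, into a small perturbation of a saddle
`u' = l u`, `v' = r v` with `l < 0 < r`. There `v² - k u²` increases along solutions both for
`k = 1` and for `k = 4`, so the cone `|v| ≤ |u|` is backward invariant and `2 |u| ≤ |v|` is forward
invariant. By compactness some nonzero solution never leaves the first cone, where it decays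
exponentially; a solution starting in the second cone grows exponentially. The two cones are
separated by a definite angle, which bounds the projection onto one solution along the other at
every time, and this gives the dichotomy on `[T, ∞)`. The compact interval `[0, T]` only costs a
constant.
-/

open Set Topology Matrix

lemma norm_fin_two (x : Fin 2 → ℝ) : ‖x‖ = max |x 0| |x 1| := by
  simp [Pi.norm_def, Fin.univ_succ]

lemma matNorm_nonneg (M : Matrix (Fin 2) (Fin 2) ℝ) : 0 ≤ matNorm M := by
  unfold matNorm
  positivity

lemma matNorm_one : matNorm 1 = 2 := by
  norm_num [matNorm]

lemma continuous_matNorm : Continuous matNorm := by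
  unfold matNorm
  fun_prop

lemma matNorm_mul_le (M N : Matrix (Fin 2) (Fin 2) ℝ) :
    matNorm (M * N) ≤ matNorm M * matNorm N := by
  have abs_mul_apply_le (i j : Fin 2) :
      |(M * N) i j| ≤ (∑ k, |M i k|) * ∑ k, |N k j| := by
    simp only [Matrix.mul_apply, Fin.sum_univ_two]
    calc |M i 0 * N 0 j + M i 1 * N 1 j|
        ≤ |M i 0| * |N 0 j| + |M i 1| * |N 1 j| := by
          simpa only [abs_mul] using abs_add_le (M i 0 * N 0 j) (M i 1 * N 1 j)
      _ ≤ (|M i 0| + |M i 1|) * (|N 0 j| + |N 1 j|) := by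
          have := mul_nonneg (abs_nonneg (M i 0)) (abs_nonneg (N 1 j))
          have := mul_nonneg (abs_nonneg (M i 1)) (abs_nonneg (N 0 j))
          linarith
  calc matNorm (M * N)
      ≤ ∑ i, ∑ j, (∑ k, |M i k|) * ∑ k, |N k j| :=
        Finset.sum_le_sum fun i _ => Finset.sum_le_sum fun j _ => abs_mul_apply_le i j
    _ = (∑ i, ∑ k, |M i k|) * ∑ j, ∑ k, |N k j| := (Finset.sum_mul_sum ..).symm
    _ = matNorm M * matNorm N := by
        rw [Finset.sum_comm (f := fun j k => |N k j|)]
        rfl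

lemma matNorm_vecMulVec_le (a b : Fin 2 → ℝ) : matNorm (vecMulVec a b) ≤ 4 * ‖a‖ * ‖b‖ := by
  have entry_le (i j : Fin 2) : |vecMulVec a b i j| ≤ ‖a‖ * ‖b‖ := by
    rw [vecMulVec_apply, abs_mul]
    exact mul_le_mul (norm_le_pi_norm a i) (norm_le_pi_norm b j) (abs_nonneg _) (norm_nonneg _)
  calc matNorm (vecMulVec a b)
      ≤ ∑ _i : Fin 2, ∑ _j : Fin 2, ‖a‖ * ‖b‖ :=
        Finset.sum_le_sum fun i _ => Finset.sum_le_sum fun j _ => entry_le i j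
    _ = 4 * ‖a‖ * ‖b‖ := by
        simp only [Finset.sum_const, Finset.card_univ, Fintype.card_fin, nsmul_eq_mul]
        push_cast
        ring

lemma norm_row_inv_fin_two (N : Matrix (Fin 2) (Fin 2) ℝ) (i : Fin 2) :
    ‖N⁻¹.row i‖ = ‖N.col i.rev‖ / |N.det| := by
  rw [Matrix.inv_def, Matrix.adjugate_fin_two, Ring.inverse_eq_inv', norm_fin_two, norm_fin_two]
  fin_cases i <;>
    simp [abs_mul, abs_inv, ← mul_max_of_nonneg, max_comm, div_eq_inv_mul]

lemma matNorm_mul_single_mul_inv_le (M N : Matrix (Fin 2) (Fin 2) ℝ) (i : Fin 2) :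
    matNorm (M * single i i 1 * N⁻¹) ≤ 4 * (‖M.col i‖ * ‖N.col i.rev‖ / |N.det|) := by
  rw [single_eq_single_vecMulVec_single, mul_vecMulVec, vecMulVec_mul, mulVec_single_one,
    single_one_vecMul, mul_div_assoc, ← norm_row_inv_fin_two, ← mul_assoc]
  exact matNorm_vecMulVec_le _ _

/-- Exponential dichotomy on `[0, ∞)` of the linear system with fundamental matrix `Φ`. The
projection acts on the coefficients `c` of the solutions `Φ t *ᵥ c`: its range gives the
exponentially decaying solutions, its kernel exponentially growing ones. -/
def HasExpDichotomy (Φ : ℝ → Matrix (Fin 2) (Fin 2) ℝ) : Prop :=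
  ∃ (P : Matrix (Fin 2) (Fin 2) ℝ) (K α : ℝ), P * P = P ∧ 1 ≤ K ∧ 0 < α ∧
    (∀ s t : ℝ, 0 ≤ s → s ≤ t → matNorm (Φ t * P * (Φ s)⁻¹) ≤ K * exp (-α * (t - s))) ∧
    (∀ t s : ℝ, 0 ≤ t → t ≤ s → matNorm (Φ t * (1 - P) * (Φ s)⁻¹) ≤ K * exp (-α * (s - t)))

namespace HasExpDichotomy

variable {Φ Ψ : ℝ → Matrix (Fin 2) (Fin 2) ℝ} {α : ℝ}

lemma of_bounds {P : Matrix (Fin 2) (Fin 2) ℝ} {K : ℝ} (hP : P * P = P) (hα : 0 < α)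
    (hstable : ∀ s t : ℝ, 0 ≤ s → s ≤ t →
      matNorm (Φ t * P * (Φ s)⁻¹) ≤ K * exp (-α * (t - s)))
    (hunstable : ∀ t s : ℝ, 0 ≤ t → t ≤ s →
      matNorm (Φ t * (1 - P) * (Φ s)⁻¹) ≤ K * exp (-α * (s - t))) :
    HasExpDichotomy Φ := by
  refine ⟨P, max K 1, α, hP, le_max_right _ _, hα, fun s t hs hst => ?_, fun t s ht hts => ?_⟩
  · exact (hstable s t hs hst).trans (by gcongr; exact le_max_left _ _)
  · exact (hunstable t s ht hts).trans (by gcongr; exact le_max_left _ _)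

theorem of_kinematicSimilarity {G : ℝ → Matrix (Fin 2) (Fin 2) ℝ} {L : ℝ}
    {C : Matrix (Fin 2) (Fin 2) ℝ} (hΨ : HasExpDichotomy Ψ) (hC : IsUnit C.det)
    (hG : ∀ t, 0 ≤ t → matNorm (G t) ≤ L) (hG' : ∀ t, 0 ≤ t → matNorm (G t)⁻¹ ≤ L)
    (hΦ : ∀ t, 0 ≤ t → Φ t = G t * Ψ t * C) : HasExpDichotomy Φ := by
  obtain ⟨P, K, α, hP, -, hα, hstable, hunstable⟩ := hΨ
  have factor (E : Matrix (Fin 2) (Fin 2) ℝ) {s t : ℝ} (hs : 0 ≤ s) (ht : 0 ≤ t) :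
      Φ t * (C⁻¹ * E * C) * (Φ s)⁻¹ = G t * (Ψ t * E * (Ψ s)⁻¹) * (G s)⁻¹ := by
    rw [hΦ t ht, hΦ s hs, Matrix.mul_inv_rev, Matrix.mul_inv_rev]
    simp only [Matrix.mul_assoc, mul_nonsing_inv_cancel_left _ _ hC]
  have bound {E : Matrix (Fin 2) (Fin 2) ℝ} {s t e : ℝ} (hs : 0 ≤ s) (ht : 0 ≤ t)
      (hE : matNorm (Ψ t * E * (Ψ s)⁻¹) ≤ K * e) :
      matNorm (Φ t * (C⁻¹ * E * C) * (Φ s)⁻¹) ≤ L * K * L * e := by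
    have hL : 0 ≤ L := (matNorm_nonneg _).trans (hG t ht)
    have hKe : 0 ≤ K * e := (matNorm_nonneg _).trans hE
    calc matNorm (Φ t * (C⁻¹ * E * C) * (Φ s)⁻¹)
        = matNorm (G t * (Ψ t * E * (Ψ s)⁻¹) * (G s)⁻¹) := by rw [factor E hs ht]
      _ ≤ matNorm (G t) * matNorm (Ψ t * E * (Ψ s)⁻¹) * matNorm (G s)⁻¹ :=
          (matNorm_mul_le _ _).trans <|
            mul_le_mul_of_nonneg_right (matNorm_mul_le _ _) (matNorm_nonneg _)
      _ ≤ L * (K * e) * L :=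
          mul_le_mul (mul_le_mul (hG t ht) hE (matNorm_nonneg _) hL) (hG' s hs)
            (matNorm_nonneg _) (mul_nonneg hL hKe)
      _ = L * K * L * e := by ring
  have hcompl : 1 - C⁻¹ * P * C = C⁻¹ * (1 - P) * C := by
    rw [Matrix.mul_sub, Matrix.sub_mul, Matrix.mul_one, nonsing_inv_mul _ hC]
  refine of_bounds (P := C⁻¹ * P * C) (K := L * K * L) ?_ hα (fun s t hs hst => ?_)
    fun t s ht hts => ?_
  · rw [← Matrix.mul_assoc, ← Matrix.mul_assoc, mul_nonsing_inv_cancel_right _ _ hC,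
      Matrix.mul_assoc _ P P, hP]
  · exact bound hs (hs.trans hst) (hstable s t hs hst)
  · rw [hcompl]
    exact bound (ht.trans hts) ht (hunstable t s ht hts)

lemma comp_of_monotoneOn {τ : ℝ → ℝ} {c : ℝ} (hΨ : HasExpDichotomy Ψ)
    (hτ_nonneg : ∀ t, 0 ≤ t → 0 ≤ τ t) (hτ_mono : MonotoneOn τ (Ici 0))
    (hτ : ∀ s t, 0 ≤ s → s ≤ t → t - s ≤ τ t - τ s + c) : HasExpDichotomy (Ψ ∘ τ) := by
  obtain ⟨P, K, α, hP, hK, hα, hstable, hunstable⟩ := hΨ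
  have exp_le {s t : ℝ} (hs : 0 ≤ s) (hst : s ≤ t) :
      K * exp (-α * (τ t - τ s)) ≤ K * exp (α * c) * exp (-α * (t - s)) := by
    rw [mul_assoc, ← exp_add]
    gcongr
    linarith [mul_le_mul_of_nonneg_left (hτ s t hs hst) hα.le]
  refine of_bounds (K := K * exp (α * c)) hP hα (fun s t hs hst => ?_) fun t s ht hts => ?_
  · exact (hstable _ _ (hτ_nonneg s hs) (hτ_mono hs (hs.trans hst) hst)).trans (exp_le hs hst)
  · exact (hunstable _ _ (hτ_nonneg t ht) (hτ_mono ht (ht.trans hts) hts)).trans (exp_le ht hts)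

/-- On `[0, T]` the fundamental matrix is compared with `Φ T`, which costs only a constant. -/
theorem of_tail {T : ℝ} (hT : 0 ≤ T) (hcont : ∀ t, 0 ≤ t → ContinuousAt Φ t)
    (hunit : ∀ t, 0 ≤ t → IsUnit (Φ t)) (h : HasExpDichotomy fun t => Φ (T + t)) :
    HasExpDichotomy Φ := by
  have hdet (t : ℝ) (ht : 0 ≤ t) : IsUnit (Φ t).det := (isUnit_iff_isUnit_det _).1 (hunit t ht)
  have hcont_inv (t : ℝ) (ht : 0 ≤ t) : ContinuousAt (fun t => (Φ t)⁻¹) t := by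
    refine (continuousAt_matrix_inv _ ?_).comp (hcont t ht)
    rw [Ring.inverse_eq_inv']
    exact continuousAt_inv₀ (hdet t ht).ne_zero
  obtain ⟨a, ha⟩ := isCompact_Icc.bddAbove_image (f := fun t => matNorm (Φ t * (Φ T)⁻¹))
    (K := Icc 0 T) fun t ht => (continuous_matNorm.continuousAt.comp
      ((hcont t ht.1).mul continuousAt_const)).continuousWithinAt
  obtain ⟨b, hb⟩ := isCompact_Icc.bddAbove_image (f := fun t => matNorm (Φ T * (Φ t)⁻¹))
    (K := Icc 0 T) fun t ht => (continuous_matNorm.continuousAt.comp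
      (continuousAt_const.mul (hcont_inv t ht.1))).continuousWithinAt
  rw [mem_upperBounds, forall_mem_image] at ha hb
  have clamped : HasExpDichotomy ((fun t => Φ (T + t)) ∘ fun t => max (t - T) 0) :=
    h.comp_of_monotoneOn (c := T) (fun t _ => le_max_right _ _)
      (fun s _ t _ hst => max_le_max_right 0 (sub_le_sub_right hst T)) (by grind)
  refine clamped.of_kinematicSimilarity (G := fun t => if t ≤ T then Φ t * (Φ T)⁻¹ else 1)
    (L := max 2 (max a b)) (C := 1) (by simp) (fun t ht => ?_) (fun t ht => ?_) fun t _ => ?_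
  · split_ifs with htT
    · exact (ha ⟨ht, htT⟩).trans (by simp)
    · simp [matNorm_one]
  · split_ifs with htT
    · rw [Matrix.mul_inv_rev, nonsing_inv_nonsing_inv _ (hdet T hT)]
      exact (hb ⟨ht, htT⟩).trans (by simp)
    · simp [matNorm_one]
  · rcases le_or_gt t T with htT | htT
    · simp [htT, nonsing_inv_mul_cancel_right _ _ (hdet T hT)]
    · simp [htT.not_ge, htT.le]

theorem of_norm_col_le {c : ℝ} (hα : 0 < α) (hc : 0 ≤ c)
    (hstable : ∀ s t, 0 ≤ s → s ≤ t →
      ‖(Φ t).col 0‖ ≤ ‖(Φ s).col 0‖ * exp (-α * (t - s)))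
    (hunstable : ∀ t s, 0 ≤ t → t ≤ s →
      ‖(Φ t).col 1‖ ≤ ‖(Φ s).col 1‖ * exp (-α * (s - t)))
    (hdet : ∀ t, 0 ≤ t → ‖(Φ t).col 0‖ * ‖(Φ t).col 1‖ ≤ c * |(Φ t).det|) :
    HasExpDichotomy Φ := by
  have bound {s t e : ℝ} (i : Fin 2) (he : 0 ≤ e) (hs : 0 ≤ s)
      (hle : ‖(Φ t).col i‖ ≤ ‖(Φ s).col i‖ * e) :
      matNorm (Φ t * single i i 1 * (Φ s)⁻¹) ≤ 4 * c * e := by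
    have angle : ‖(Φ s).col i‖ * ‖(Φ s).col i.rev‖ ≤ c * |(Φ s).det| := by
      fin_cases i
      · exact hdet s hs
      · exact (mul_comm _ _).trans_le (hdet s hs)
    calc matNorm (Φ t * single i i 1 * (Φ s)⁻¹)
        ≤ 4 * (‖(Φ t).col i‖ * ‖(Φ s).col i.rev‖ / |(Φ s).det|) :=
          matNorm_mul_single_mul_inv_le _ _ i
      _ ≤ 4 * (‖(Φ s).col i‖ * e * ‖(Φ s).col i.rev‖ / |(Φ s).det|) := by gcongr
      _ = 4 * (e * (‖(Φ s).col i‖ * ‖(Φ s).col i.rev‖ / |(Φ s).det|)) := by ring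
      _ ≤ 4 * (e * c) := by
          gcongr
          exact div_le_of_le_mul₀ (abs_nonneg _) hc angle
      _ = 4 * c * e := by ring
  have hcompl : (1 : Matrix (Fin 2) (Fin 2) ℝ) - single 0 0 1 = single 1 1 1 := by
    ext i j
    fin_cases i <;> fin_cases j <;> simp
  refine of_bounds (P := single 0 0 1) (K := 4 * c) (by simp) hα (fun s t hs hst => ?_)
    fun t s ht hts => ?_
  · exact bound 0 (exp_pos _).le hs (hstable s t hs hst)
  · rw [hcompl]
    exact bound 1 (exp_pos _).le (ht.trans hts) (hunstable t s ht hts)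

end HasExpDichotomy

section LinearODE

variable {n : Type*} [Fintype n] {A : ℝ → Matrix n n ℝ}

/-- `x` solves `x' = A(t) x` on `[0, ∞)`, with a two-sided derivative at `0`. -/
def IsSolution (A : ℝ → Matrix n n ℝ) (x : ℝ → n → ℝ) : Prop :=
  ∀ t, 0 ≤ t → HasDerivAt x (A t *ᵥ x t) t

variable [DecidableEq n] {Φ : ℝ → Matrix n n ℝ}

/-- `Φ` is a fundamental matrix of `x' = A(t) x` on `[0, ∞)`, not normalized at `0`. The derivative
is taken entrywise because matrices carry no global norm. -/
structure IsFundamentalMatrix (A Φ : ℝ → Matrix n n ℝ) : Prop where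
  hasDerivAt : ∀ t, 0 ≤ t → ∀ i j, HasDerivAt (fun s => Φ s i j) ((A t * Φ t) i j) t
  isUnit : ∀ t, 0 ≤ t → IsUnit (Φ t)

namespace IsFundamentalMatrix

lemma continuousAt (h : IsFundamentalMatrix A Φ) {t : ℝ} (ht : 0 ≤ t) : ContinuousAt Φ t :=
  continuousAt_pi.2 fun i => continuousAt_pi.2 fun j => (h.hasDerivAt t ht i j).continuousAt

lemma isSolution_mulVec (h : IsFundamentalMatrix A Φ) (c : n → ℝ) :
    IsSolution A fun t => Φ t *ᵥ c := by
  intro t ht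
  rw [mulVec_mulVec, hasDerivAt_pi]
  exact fun i => HasDerivAt.fun_sum fun j _ => (h.hasDerivAt t ht i j).mul_const (c j)

lemma comp_const_add (h : IsFundamentalMatrix A Φ) {T : ℝ} (hT : 0 ≤ T) :
    IsFundamentalMatrix (fun t => A (T + t)) fun t => Φ (T + t) where
  hasDerivAt t ht i j := (h.hasDerivAt (T + t) (add_nonneg hT ht) i j).comp_const_add T t
  isUnit t ht := h.isUnit (T + t) (add_nonneg hT ht)

lemma const_mul (h : IsFundamentalMatrix A Φ) {R : Matrix n n ℝ} (hR : IsUnit R.det) :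
    IsFundamentalMatrix (fun t => R * A t * R⁻¹) fun t => R * Φ t where
  hasDerivAt t ht i j := by
    rw [Matrix.mul_assoc, nonsing_inv_mul_cancel_left _ _ hR, Matrix.mul_assoc]
    exact HasDerivAt.fun_sum fun k _ => (h.hasDerivAt t ht k j).const_mul (R i k)
  isUnit t ht := ((isUnit_iff_isUnit_det R).2 hR).mul (h.isUnit t ht)

end IsFundamentalMatrix

end LinearODE

lemma le_mul_exp_of_hasDerivAt_le {f f' : ℝ → ℝ} {k s t : ℝ}
    (hf : ∀ τ, s ≤ τ → HasDerivAt f (f' τ) τ) (hf' : ∀ τ, s ≤ τ → f' τ ≤ k * f τ) (hst : s ≤ t) :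
    f t ≤ f s * exp (k * (t - s)) := by
  rw [← gronwallBound_ε0]
  exact le_gronwallBound_of_liminf_deriv_right_le
    (fun τ hτ => (hf τ hτ.1).continuousAt.continuousWithinAt)
    (fun τ hτ _ => (hf τ hτ.1).hasDerivWithinAt.liminf_right_slope_le) le_rfl
    (fun τ hτ => (hf' τ hτ.1).trans_eq (add_zero _).symm) t ⟨hst, le_rfl⟩

lemma abs_le_abs_mul_exp_half {a b r : ℝ} (h : a ^ 2 ≤ b ^ 2 * exp r) :
    |a| ≤ |b| * exp (r / 2) := by
  refine abs_le_of_sq_le_sq ?_ (by positivity)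
  rwa [mul_pow, sq_abs, ← exp_nat_mul, Nat.cast_ofNat, mul_div_cancel₀ r two_ne_zero]

/-- A quantitative neighbourhood of the diagonal saddles: the first axis is contracted and the
second one expanded at rate at least `m`, and the coupling is at most `m / 4`, which is small enough
for the cone estimates below. -/
structure IsNearSaddle (m : ℝ) (M : Matrix (Fin 2) (Fin 2) ℝ) : Prop where
  apply_zero_zero_le : M 0 0 ≤ -m
  le_apply_one_one : m ≤ M 1 1
  abs_apply_zero_one_le : |M 0 1| ≤ m / 4
  abs_apply_one_zero_le : |M 1 0| ≤ m / 4

lemma abs_mul_mul_le {q e u v : ℝ} (hq : |q| ≤ e) : |q * (u * v)| ≤ e / 2 * (u ^ 2 + v ^ 2) := by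
  have huv : |u * v| ≤ (u ^ 2 + v ^ 2) / 2 := by
    rw [abs_le]
    constructor <;> linarith [sq_nonneg (u + v), sq_nonneg (u - v)]
  calc |q * (u * v)| = |q| * |u * v| := abs_mul _ _
    _ ≤ e * ((u ^ 2 + v ^ 2) / 2) := mul_le_mul hq huv (abs_nonneg _) ((abs_nonneg q).trans hq)
    _ = e / 2 * (u ^ 2 + v ^ 2) := by ring

namespace IsNearSaddle

variable {m : ℝ} {M : Matrix (Fin 2) (Fin 2) ℝ}

lemma nonneg (hM : IsNearSaddle m M) : 0 ≤ m := by
  linarith [(abs_nonneg _).trans hM.abs_apply_zero_one_le]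

lemma apply_zero_mul_mulVec_zero_le (hM : IsNearSaddle m M) (x : Fin 2 → ℝ) :
    x 0 * (M *ᵥ x) 0 ≤ -m * x 0 ^ 2 + m / 8 * (x 0 ^ 2 + x 1 ^ 2) := by
  have diagonal := mul_le_mul_of_nonneg_right hM.apply_zero_zero_le (sq_nonneg (x 0))
  have coupling := (abs_le.1 (abs_mul_mul_le (u := x 0) (v := x 1) hM.abs_apply_zero_one_le)).2
  rw [mulVec, dotProduct, Fin.sum_univ_two]
  linarith

lemma le_apply_one_mul_mulVec_one (hM : IsNearSaddle m M) (x : Fin 2 → ℝ) :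
    m * x 1 ^ 2 - m / 8 * (x 0 ^ 2 + x 1 ^ 2) ≤ x 1 * (M *ᵥ x) 1 := by
  have diagonal := mul_le_mul_of_nonneg_right hM.le_apply_one_one (sq_nonneg (x 1))
  have coupling := (abs_le.1 (abs_mul_mul_le (u := x 0) (v := x 1) hM.abs_apply_one_zero_le)).1
  rw [mulVec, dotProduct, Fin.sum_univ_two]
  linarith

end IsNearSaddle

namespace IsSolution

variable {m : ℝ} {B : ℝ → Matrix (Fin 2) (Fin 2) ℝ} {x : ℝ → Fin 2 → ℝ}

lemma hasDerivAt_sq (hx : IsSolution B x) {t : ℝ} (ht : 0 ≤ t) (i : Fin 2) :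
    HasDerivAt (fun t => x t i ^ 2) (2 * (x t i * (B t *ᵥ x t) i)) t :=
  ((hasDerivAt_pi.1 (hx t ht) i).fun_pow 2).congr_deriv (by norm_num [mul_assoc])

lemma monotoneOn_sq_sub_mul_sq (hx : IsSolution B x) (hB : ∀ t, 0 ≤ t → IsNearSaddle m (B t))
    {k : ℝ} (hk₁ : 1 ≤ 7 * k) (hk₇ : k ≤ 7) :
    MonotoneOn (fun t => x t 1 ^ 2 - k * x t 0 ^ 2) (Ici 0) := by
  have hderiv (t : ℝ) (ht : 0 ≤ t) :=
    (hx.hasDerivAt_sq ht 1).sub ((hx.hasDerivAt_sq ht 0).const_mul k)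
  refine monotoneOn_of_hasDerivWithinAt_nonneg (convex_Ici 0)
    (fun t ht => (hderiv t ht).continuousAt.continuousWithinAt)
    (fun t ht => (hderiv t (interior_subset ht)).hasDerivWithinAt) fun t ht => ?_
  have hBt := hB t (interior_subset ht)
  have h₀ := mul_le_mul_of_nonneg_left (hBt.apply_zero_mul_mulVec_zero_le (x t))
    (show 0 ≤ k by linarith)
  have h₁ := hBt.le_apply_one_mul_mulVec_one (x t)
  have hu := mul_nonneg (sub_nonneg.2 hk₁) (mul_nonneg hBt.nonneg (sq_nonneg (x t 0)))
  have hv := mul_nonneg (sub_nonneg.2 hk₇) (mul_nonneg hBt.nonneg (sq_nonneg (x t 1)))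
  linarith

lemma norm_le_mul_exp_of_stable (hx : IsSolution B x) (hB : ∀ t, 0 ≤ t → IsNearSaddle m (B t))
    (hcone : ∀ t, 0 ≤ t → |x t 1| ≤ |x t 0|) {s t : ℝ} (hs : 0 ≤ s) (hst : s ≤ t) :
    ‖x t‖ ≤ ‖x s‖ * exp (-(m / 2) * (t - s)) := by
  have decay : x t 0 ^ 2 ≤ x s 0 ^ 2 * exp (-m * (t - s)) := by
    refine le_mul_exp_of_hasDerivAt_le (fun τ hτ => hx.hasDerivAt_sq (hs.trans hτ) 0)
      (fun τ hτ => ?_) hst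
    have hBτ := hB τ (hs.trans hτ)
    have := hBτ.apply_zero_mul_mulVec_zero_le (x τ)
    have := mul_le_mul_of_nonneg_left (sq_le_sq.2 (hcone τ (hs.trans hτ))) hBτ.nonneg
    have := mul_nonneg hBτ.nonneg (sq_nonneg (x τ 0))
    linarith
  rw [norm_fin_two, norm_fin_two, max_eq_left (hcone t (hs.trans hst)), max_eq_left (hcone s hs)]
  convert abs_le_abs_mul_exp_half decay using 3
  ring

lemma norm_le_mul_exp_of_unstable (hx : IsSolution B x) (hB : ∀ t, 0 ≤ t → IsNearSaddle m (B t))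
    (hcone : ∀ t, 0 ≤ t → |x t 0| ≤ |x t 1|) {s t : ℝ} (ht : 0 ≤ t) (hts : t ≤ s) :
    ‖x t‖ ≤ ‖x s‖ * exp (-(m / 2) * (s - t)) := by
  have growth : -x s 1 ^ 2 ≤ -x t 1 ^ 2 * exp (m * (s - t)) := by
    refine le_mul_exp_of_hasDerivAt_le (fun τ hτ => (hx.hasDerivAt_sq (ht.trans hτ) 1).fun_neg)
      (fun τ hτ => ?_) hts
    have hBτ := hB τ (ht.trans hτ)
    have := hBτ.le_apply_one_mul_mulVec_one (x τ)
    have := mul_le_mul_of_nonneg_left (sq_le_sq.2 (hcone τ (ht.trans hτ))) hBτ.nonneg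
    have := mul_nonneg hBτ.nonneg (sq_nonneg (x τ 1))
    linarith
  have backward : x t 1 ^ 2 ≤ x s 1 ^ 2 * exp (-(m * (s - t))) := by
    rw [Real.exp_neg, ← div_eq_mul_inv, le_div_iff₀ (exp_pos _)]
    linarith
  rw [norm_fin_two, norm_fin_two, max_eq_right (hcone t ht), max_eq_right (hcone s (ht.trans hts))]
  convert abs_le_abs_mul_exp_half backward using 3
  ring

end IsSolution

/-- The normalized vectors sent into `K` by `Φ t` form a decreasing family of nonempty compacts. -/
theorem exists_ne_zero_forall_mulVec_mem {ι n : Type*} [Preorder ι] [IsDirectedOrder ι] [Nonempty ι]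
    [Fintype n] [DecidableEq n] {Φ : ι → Matrix n n ℝ} (hΦ : ∀ t, IsUnit (Φ t))
    {K : Set (n → ℝ)} (hK : IsClosed K) (hsmul : ∀ c : ℝ, ∀ x ∈ K, c • x ∈ K)
    (hne : ∃ w ∈ K, w ≠ 0) (hback : ∀ s t, s ≤ t → ∀ x, Φ t *ᵥ x ∈ K → Φ s *ᵥ x ∈ K) :
    ∃ x, x ≠ 0 ∧ ∀ t, Φ t *ᵥ x ∈ K := by
  let Z (t : ι) : Set (n → ℝ) := Metric.sphere 0 1 ∩ {x | Φ t *ᵥ x ∈ K}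
  have Z_closed (t : ι) : IsClosed (Z t) :=
    Metric.isClosed_sphere.inter (hK.preimage (by fun_prop : Continuous fun x => Φ t *ᵥ x))
  have Z_antitone : Antitone Z := fun s t hst => inter_subset_inter_right _ fun x => hback s t hst x
  have Z_nonempty (t : ι) : (Z t).Nonempty := by
    obtain ⟨w, hwK, hw⟩ := hne
    obtain ⟨y, rfl⟩ := mulVec_surjective_iff_isUnit.2 (hΦ t) w
    have hy : y ≠ 0 := by
      rintro rfl
      exact hw (mulVec_zero _)
    refine ⟨‖y‖⁻¹ • y, by simp [norm_smul, hy], ?_⟩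
    rw [mem_ofPred_eq, mulVec_smul]
    exact hsmul _ _ hwK
  obtain ⟨x, hx⟩ := IsCompact.nonempty_iInter_of_directed_nonempty_isCompact_isClosed Z
    Z_antitone.directed_ge Z_nonempty
    (fun t => (isCompact_sphere 0 1).of_isClosed_subset (Z_closed t) inter_subset_left) Z_closed
  rw [mem_iInter] at hx
  refine ⟨x, ?_, fun t => (hx t).2⟩
  exact Metric.ne_of_mem_sphere (hx (Classical.arbitrary ι)).1 one_ne_zero

lemma norm_col_mul_norm_col_le_two_mul_abs_det {N : Matrix (Fin 2) (Fin 2) ℝ}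
    (h₀ : |N 1 0| ≤ |N 0 0|) (h₁ : 2 * |N 0 1| ≤ |N 1 1|) :
    ‖N.col 0‖ * ‖N.col 1‖ ≤ 2 * |N.det| := by
  have off_diagonal_le : 2 * (|N 0 1| * |N 1 0|) ≤ |N 0 0| * |N 1 1| := by
    linarith [mul_le_mul h₁ h₀ (abs_nonneg _) (abs_nonneg _)]
  have le_det : |N 0 0| * |N 1 1| - |N 0 1| * |N 1 0| ≤ |N.det| := by
    rw [det_fin_two, ← abs_mul, ← abs_mul]
    exact abs_sub_abs_le_abs_sub _ _
  rw [norm_fin_two, norm_fin_two, col_apply, col_apply, col_apply, col_apply, max_eq_left h₀,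
    max_eq_right (by linarith [abs_nonneg (N 0 1)])]
  linarith

namespace IsFundamentalMatrix

variable {m : ℝ} {B Φ : ℝ → Matrix (Fin 2) (Fin 2) ℝ}

lemma exists_stable_initial_value (hΦ : IsFundamentalMatrix B Φ)
    (hB : ∀ t, 0 ≤ t → IsNearSaddle m (B t)) :
    ∃ x, x ≠ 0 ∧ ∀ t, 0 ≤ t → |(Φ t *ᵥ x) 1| ≤ |(Φ t *ᵥ x) 0| := by
  have backward_invariant (s t : Ici (0 : ℝ)) (hst : s ≤ t) (x : Fin 2 → ℝ)
      (ht : |(Φ t *ᵥ x) 1| ≤ |(Φ t *ᵥ x) 0|) : |(Φ s *ᵥ x) 1| ≤ |(Φ s *ᵥ x) 0| := by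
    have mono := (hΦ.isSolution_mulVec x).monotoneOn_sq_sub_mul_sq hB (k := 1) (by norm_num)
      (by norm_num) s.2 t.2 hst
    rw [← sq_le_sq] at ht ⊢
    simp only at mono
    linarith
  obtain ⟨x, hx, hcone⟩ := exists_ne_zero_forall_mulVec_mem (Φ := fun t : Ici (0 : ℝ) => Φ t)
    (K := {w | |w 1| ≤ |w 0|}) (fun t => hΦ.isUnit t t.2)
    (isClosed_le (by fun_prop) (by fun_prop))
    (fun c w hw => by simpa [abs_mul] using mul_le_mul_of_nonneg_left hw (abs_nonneg c))
    ⟨![1, 0], by simp, by simp⟩ backward_invariant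
  exact ⟨x, hx, fun t ht => hcone ⟨t, ht⟩⟩

lemma exists_unstable_initial_value (hΦ : IsFundamentalMatrix B Φ)
    (hB : ∀ t, 0 ≤ t → IsNearSaddle m (B t)) :
    ∃ y, Φ 0 *ᵥ y ≠ 0 ∧ ∀ t, 0 ≤ t → 2 * |(Φ t *ᵥ y) 0| ≤ |(Φ t *ᵥ y) 1| := by
  obtain ⟨y, hy⟩ := mulVec_surjective_iff_isUnit.2 (hΦ.isUnit 0 le_rfl) ![0, 1]
  refine ⟨y, by simp [hy], fun t ht => ?_⟩
  have mono := (hΦ.isSolution_mulVec y).monotoneOn_sq_sub_mul_sq hB (k := 4) (by norm_num)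
    (by norm_num) self_mem_Ici ht ht
  have : (2 * (Φ t *ᵥ y) 0) ^ 2 ≤ (Φ t *ᵥ y) 1 ^ 2 := by
    simp only [hy, cons_val_zero, cons_val_one] at mono
    linarith
  simpa [abs_mul] using sq_le_sq.1 this

theorem hasExpDichotomy_of_isNearSaddle (hΦ : IsFundamentalMatrix B Φ) (hm : 0 < m)
    (hB : ∀ t, 0 ≤ t → IsNearSaddle m (B t)) : HasExpDichotomy Φ := by
  obtain ⟨x, hx, hx_cone⟩ := hΦ.exists_stable_initial_value hB
  obtain ⟨y, hy, hy_cone⟩ := hΦ.exists_unstable_initial_value hB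
  let C : Matrix (Fin 2) (Fin 2) ℝ := (of ![x, y])ᵀ
  have angle (t : ℝ) (ht : 0 ≤ t) :
      ‖(Φ t * C).col 0‖ * ‖(Φ t * C).col 1‖ ≤ 2 * |(Φ t * C).det| :=
    norm_col_mul_norm_col_le_two_mul_abs_det (hx_cone t ht) (hy_cone t ht)
  have hC : IsUnit C.det := by
    have hx' : Φ 0 *ᵥ x ≠ 0 := by
      simpa using (mulVec_injective_of_isUnit (hΦ.isUnit 0 le_rfl)).ne hx
    have col_norms_pos : 0 < ‖(Φ 0 * C).col 0‖ * ‖(Φ 0 * C).col 1‖ :=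
      mul_pos (norm_pos_iff.2 hx') (norm_pos_iff.2 hy)
    have det_pos : 0 < |(Φ 0 * C).det| := by linarith [angle 0 le_rfl]
    rw [det_mul] at det_pos
    exact (right_ne_zero_of_mul (abs_pos.1 det_pos)).isUnit
  have dichotomy : HasExpDichotomy fun t => Φ t * C :=
    .of_norm_col_le (half_pos hm) zero_le_two
      (fun s t hs hst => (hΦ.isSolution_mulVec x).norm_le_mul_exp_of_stable hB hx_cone hs hst)
      (fun t s ht hts => (hΦ.isSolution_mulVec y).norm_le_mul_exp_of_unstable hB
        (fun t ht => by linarith [hy_cone t ht, abs_nonneg ((Φ t *ᵥ y) 0)]) ht hts)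
      angle
  exact dichotomy.of_kinematicSimilarity (G := 1) (isUnit_nonsing_inv_det _ hC)
    (fun t _ => matNorm_one.le) (fun t _ => by simp [matNorm_one])
    (fun t _ => by simp [mul_nonsing_inv_cancel_right _ _ hC])

end IsFundamentalMatrix

theorem exists_mul_mul_inv_eq_diagonal {K n : Type*} [Field K] [Fintype n] [DecidableEq n]
    {A : Matrix n n K} {μ : n → K} (hμ : Function.Injective μ)
    (hroot : ∀ i, A.charpoly.IsRoot (μ i)) :
    ∃ R : Matrix n n K, IsUnit R.det ∧ R * A * R⁻¹ = diagonal μ := by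
  have heigen (i : n) : Module.End.HasEigenvalue (toLin' A) (μ i) := by
    rw [Module.End.hasEigenvalue_iff_isRoot_charpoly, charpoly_toLin']
    exact hroot i
  choose v hv using fun i => (heigen i).exists_hasEigenvector
  let S : Matrix n n K := (of v)ᵀ
  have hS : IsUnit S.det := by
    rw [← isUnit_iff_isUnit_det, ← linearIndependent_cols_iff_isUnit]
    exact Module.End.eigenvectors_linearIndependent' _ μ hμ v hv
  have hAS : A * S = S * diagonal μ := by
    ext i j
    rw [mul_diagonal, mul_comm]
    exact congrFun (hv j).apply_eq_smul i
  refine ⟨S⁻¹, isUnit_nonsing_inv_det _ hS, ?_⟩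
  rw [nonsing_inv_nonsing_inv _ hS, Matrix.mul_assoc, hAS, nonsing_inv_mul_cancel_left _ _ hS]

theorem exists_mul_mul_inv_eq_diagonal_of_det_neg {A : Matrix (Fin 2) (Fin 2) ℝ} (hA : A.det < 0) :
    ∃ (R : Matrix (Fin 2) (Fin 2) ℝ) (l u : ℝ), IsUnit R.det ∧ l < 0 ∧ 0 < u ∧
      R * A * R⁻¹ = diagonal ![l, u] := by
  set r := √(A.trace ^ 2 - 4 * A.det)
  have hr : r ^ 2 = A.trace ^ 2 - 4 * A.det := sq_sqrt (by nlinarith)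
  obtain ⟨hlt, hgt⟩ := abs_lt.1 (lt_sqrt_of_sq_lt (x := |A.trace|)
    (y := A.trace ^ 2 - 4 * A.det) (by rw [sq_abs]; linarith))
  have hl : (A.trace - r) / 2 < 0 := by linarith
  have hu : 0 < (A.trace + r) / 2 := by linarith
  obtain ⟨R, hR, hRA⟩ := exists_mul_mul_inv_eq_diagonal (A := A)
    (μ := ![(A.trace - r) / 2, (A.trace + r) / 2])
    (by
      rw [Function.Injective, Fin.forall_fin_two]
      simp [Fin.forall_fin_two, (hl.trans hu).ne, (hl.trans hu).ne'])
    (by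
      rw [Fin.forall_fin_two, charpoly_fin_two]
      constructor <;> simp <;> linarith)
  exact ⟨R, _, _, hR, hl, hu, hRA⟩

lemma exists_eventually_isNearSaddle {l u : ℝ} (hl : l < 0) (hu : 0 < u) :
    ∃ m, 0 < m ∧ ∀ᶠ M in 𝓝 (diagonal ![l, u]), IsNearSaddle m M := by
  have entry_tendsto (i j : Fin 2) :
      Tendsto (fun M : Matrix (Fin 2) (Fin 2) ℝ => M i j) (𝓝 (diagonal ![l, u]))
        (𝓝 (diagonal ![l, u] i j)) :=
    (continuous_id.matrix_elem i j).tendsto _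
  obtain ⟨m, hm, hmlu⟩ := exists_between (lt_min (neg_pos.2 hl) hu)
  obtain ⟨hml, hmu⟩ := lt_min_iff.1 hmlu
  refine ⟨m, hm, ?_⟩
  filter_upwards [(entry_tendsto 0 0).eventually_lt_const (u := -m) (by simpa using lt_neg.1 hml),
    (entry_tendsto 1 1).eventually_const_lt (u := m) (by simpa using hmu),
    (entry_tendsto 0 1).abs.eventually_lt_const (u := m / 4) (by simpa using hm),
    (entry_tendsto 1 0).abs.eventually_lt_const (u := m / 4) (by simpa using hm)]
    with M h₀₀ h₁₁ h₀₁ h₁₀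
  exact ⟨h₀₀.le, h₁₁.le, h₀₁.le, h₁₀.le⟩

theorem exponential_dichotomy_on_halfline_general {A Φ : ℝ → Matrix (Fin 2) (Fin 2) ℝ}
    {Ainf : Matrix (Fin 2) (Fin 2) ℝ} (hlim : Tendsto A atTop (𝓝 Ainf)) (hdet : Ainf.det < 0)
    (hΦ : IsFundamentalMatrix A Φ) : HasExpDichotomy Φ := by
  obtain ⟨R, l, u, hR, hl, hu, hdiag⟩ := exists_mul_mul_inv_eq_diagonal_of_det_neg hdet
  obtain ⟨m, hm, hsaddle⟩ := exists_eventually_isNearSaddle hl hu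
  have hlim' : Tendsto (fun t => R * A t * R⁻¹) atTop (𝓝 (diagonal ![l, u])) :=
    hdiag ▸ (hlim.const_mul R).mul_const R⁻¹
  obtain ⟨T, hT⟩ := eventually_atTop.1 (hlim'.eventually hsaddle)
  have hT₀ : 0 ≤ max T 0 := le_max_right _ _
  have tail : HasExpDichotomy fun t => R * Φ (max T 0 + t) :=
    ((hΦ.comp_const_add hT₀).const_mul hR).hasExpDichotomy_of_isNearSaddle hm fun t ht =>
      hT _ ((le_max_left T 0).trans (le_add_of_nonneg_right ht))
  refine HasExpDichotomy.of_tail hT₀ (fun t ht => hΦ.continuousAt ht) hΦ.isUnit ?_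
  exact tail.of_kinematicSimilarity (G := fun _ => R⁻¹) (C := 1) (by simp)
    (fun _ _ => le_max_left _ _) (fun _ _ => le_max_right _ _)
    (fun _ _ => by simp [nonsing_inv_mul_cancel_left _ _ hR])

/-- If `A : [0,∞) → ℝ^{2×2}` is bounded and continuous with `A(t) → A_∞` where
`det A_∞ < 0`, then the system `x′ = A(t)x` has an exponential dichotomy on `[0,∞)`: there are a
projection `P` (`P² = P`) and constants `K ≥ 1`, `α > 0` such that the fundamental matrix `Φ`
satisfies `‖Φ(t)PΦ(s)⁻¹‖ ≤ Ke^{−α(t−s)}` for `0 ≤ s ≤ t` and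
`‖Φ(t)(I−P)Φ(s)⁻¹‖ ≤ Ke^{−α(s−t)}` for `0 ≤ t ≤ s`. -/
theorem exponential_dichotomy_on_halfline
    (A : ℝ → Matrix (Fin 2) (Fin 2) ℝ)
    (hAbd : ∃ M : ℝ, ∀ t : ℝ, 0 ≤ t → matNorm (A t) ≤ M)
    (hAcont : ∀ i j : Fin 2, ContinuousOn (fun t => A t i j) (Set.Ici 0))
    (Ainf : Matrix (Fin 2) (Fin 2) ℝ)
    (hlim : ∀ i j : Fin 2, Tendsto (fun t => A t i j) atTop (nhds (Ainf i j)))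
    (hdet : Ainf.det < 0)
    (Φ : ℝ → Matrix (Fin 2) (Fin 2) ℝ)
    (hΦderiv : ∀ t : ℝ, 0 ≤ t → ∀ i j : Fin 2,
      HasDerivAt (fun s => Φ s i j) ((A t * Φ t) i j) t)
    (hΦ0 : Φ 0 = 1)
    (hΦinv : ∀ t : ℝ, 0 ≤ t → IsUnit (Φ t)) :
    ∃ (P : Matrix (Fin 2) (Fin 2) ℝ) (K α : ℝ), P * P = P ∧ 1 ≤ K ∧ 0 < α ∧
      (∀ s t : ℝ, 0 ≤ s → s ≤ t →
        matNorm (Φ t * P * (Φ s)⁻¹) ≤ K * Real.exp (-α * (t - s))) ∧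
      (∀ t s : ℝ, 0 ≤ t → t ≤ s →
        matNorm (Φ t * (1 - P) * (Φ s)⁻¹) ≤ K * Real.exp (-α * (s - t))) := by
  exact exponential_dichotomy_on_halfline_general
    (tendsto_pi_nhds.2 fun i => tendsto_pi_nhds.2 (hlim i)) hdet ⟨hΦderiv, hΦinv⟩
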